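/- For any subsets S ⊆ {1,…,E} and T ⊆ {1,…,N_G}, the set Q(S,T) := {f ∈ ℝ^{N_G} : there exist τ ∈ ℝ^{N+1}, μ ∈ ℝ^{E} with μ_e = 0 for all e ∉ S, and λ ∈ ℝ^{N_G} with λ_i = 0 for all i ∉ T, such that 0 = Mᵀτ + C B μ and −f = −(τ₁,…,τ_{N_G}) + λ} is contained in a linear subspace of ℝ^{N_G} of dimension at most |S| + |T| + 1. -/

import Mathlib

open Matrix

noncomputable section

/-- Parameter tuple ξ = (s̄, s̲, p̄, p̲). -/
abbrev XiT (NG E : ℕ) : Type := (Fin NG → ℝ) × (Fin NG → ℝ) × (Fin E → ℝ) × (Fin E → ℝ)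

/-- Each column of `C` has exactly one `+1`, one `-1`, and zeros elsewhere. -/
def IsIncidence {NG NL E : ℕ} (C : Matrix (Fin (NG + NL)) (Fin E) ℝ) : Prop :=
  ∀ e : Fin E, ∃ u v : Fin (NG + NL), u ≠ v ∧ C u e = 1 ∧ C v e = -1 ∧
    ∀ w : Fin (NG + NL), w ≠ u → w ≠ v → C w e = 0

/-- Connectedness: the kernel of `Cᵀ` consists exactly of the constant vectors. -/
def ConnectedIncidence {NG NL E : ℕ} (C : Matrix (Fin (NG + NL)) (Fin E) ℝ) : Prop :=
  ∀ x : Fin (NG + NL) → ℝ, Cᵀ *ᵥ x = 0 ↔ ∃ c : ℝ, x = fun _ => c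

/-- `B` is diagonal with strictly positive diagonal entries. -/
def PosDiag {E : ℕ} (B : Matrix (Fin E) (Fin E) ℝ) : Prop :=
  (∀ e, 0 < B e e) ∧ ∀ e e' : Fin E, e ≠ e' → B e e' = 0

/-- Feasibility of `(s^g, θ)` for the DC-OPF with limits `ξ` and loads `sl`. -/
def Feasible {NG NL E : ℕ} (C : Matrix (Fin (NG + NL)) (Fin E) ℝ)
    (B : Matrix (Fin E) (Fin E) ℝ) (ξ : XiT NG E) (sl : Fin NL → ℝ)
    (sg : Fin NG → ℝ) (θ : Fin (NG + NL) → ℝ) : Prop :=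
  (∀ h : 0 < NG + NL, θ ⟨0, h⟩ = 0) ∧
  (C * B * Cᵀ) *ᵥ θ = Fin.append sg (fun j => -(sl j)) ∧
  (∀ i, ξ.2.1 i ≤ sg i ∧ sg i ≤ ξ.1 i) ∧
  (∀ e, ξ.2.2.2 e ≤ ((B * Cᵀ) *ᵥ θ) e ∧ ((B * Cᵀ) *ᵥ θ) e ≤ ξ.2.2.1 e)

/-- The set Ω_ξ of admissible system limits. -/
def OmegaXi {NG NL E : ℕ} (C : Matrix (Fin (NG + NL)) (Fin E) ℝ)
    (B : Matrix (Fin E) (Fin E) ℝ) : Set (XiT NG E) :=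
  { ξ | (∀ i, 0 ≤ ξ.2.1 i) ∧ (∀ i, ξ.2.1 i < ξ.1 i) ∧ (∀ e, ξ.2.2.2 e < ξ.2.2.1 e) ∧
    ∃ sl : Fin NL → ℝ, (∀ j, 0 < sl j) ∧ ∃ sg θ, Feasible C B ξ sl sg θ }

/-- The set Ω_sl(ξ) of strictly positive feasible load profiles. -/
def OmegaSl {NG NL E : ℕ} (C : Matrix (Fin (NG + NL)) (Fin E) ℝ)
    (B : Matrix (Fin E) (Fin E) ℝ) (ξ : XiT NG E) : Set (Fin NL → ℝ) :=
  { sl | (∀ j, 0 < sl j) ∧ ∃ sg θ, Feasible C B ξ sl sg θ }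

/-- `(sg, θ)` is an optimal solution of the DC-OPF. -/
def IsOptimal {NG NL E : ℕ} (C : Matrix (Fin (NG + NL)) (Fin E) ℝ)
    (B : Matrix (Fin E) (Fin E) ℝ) (f : Fin NG → ℝ) (ξ : XiT NG E)
    (sl : Fin NL → ℝ) (sg : Fin NG → ℝ) (θ : Fin (NG + NL) → ℝ) : Prop :=
  Feasible C B ξ sl sg θ ∧
  ∀ sg' θ', Feasible C B ξ sl sg' θ' → f ⬝ᵥ sg ≤ f ⬝ᵥ sg'

/-- The matrix M: first N rows are C B Cᵀ, last row is e₁ᵀ. -/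
def Mmat {NG NL E : ℕ} (C : Matrix (Fin (NG + NL)) (Fin E) ℝ)
    (B : Matrix (Fin E) (Fin E) ℝ) : Matrix (Fin (NG + NL + 1)) (Fin (NG + NL)) ℝ :=
  Matrix.of fun i j => if h : (i : ℕ) < NG + NL then (C * B * Cᵀ) ⟨(i : ℕ), h⟩ j
    else if (j : ℕ) = 0 then 1 else 0

/-- KKT point for the DC-OPF. -/
def IsKKT {NG NL E : ℕ} (C : Matrix (Fin (NG + NL)) (Fin E) ℝ)
    (B : Matrix (Fin E) (Fin E) ℝ) (f : Fin NG → ℝ) (ξ : XiT NG E)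
    (sl : Fin NL → ℝ) (sg : Fin NG → ℝ) (θ : Fin (NG + NL) → ℝ)
    (τ : Fin (NG + NL + 1) → ℝ) (μp μm : Fin E → ℝ) (lp lm : Fin NG → ℝ) : Prop :=
  Feasible C B ξ sl sg θ ∧
  (Mmat C B)ᵀ *ᵥ τ + (C * B) *ᵥ (μp - μm) = 0 ∧
  (∀ i : Fin NG, -f i = -τ (Fin.castLE (by omega) i) + lp i - lm i) ∧
  (∀ e, 0 ≤ μp e) ∧ (∀ e, 0 ≤ μm e) ∧ (∀ i, 0 ≤ lp i) ∧ (∀ i, 0 ≤ lm i) ∧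
  μp ⬝ᵥ (((B * Cᵀ) *ᵥ θ) - ξ.2.2.1) = 0 ∧
  μm ⬝ᵥ (ξ.2.2.2 - ((B * Cᵀ) *ᵥ θ)) = 0 ∧
  lp ⬝ᵥ (sg - ξ.1) = 0 ∧
  lm ⬝ᵥ (ξ.2.1 - sg) = 0

/-- ℓ₀ "norm": number of nonzero entries. -/
def nnz {n : ℕ} (v : Fin n → ℝ) : ℕ := Set.ncard { i | v i ≠ 0 }

/-- The set Ω_f of well-behaved cost vectors. -/
def OmegaF {NG NL E : ℕ} (C : Matrix (Fin (NG + NL)) (Fin E) ℝ)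
    (B : Matrix (Fin E) (Fin E) ℝ) : Set (Fin NG → ℝ) :=
  { f | (∀ i, 0 ≤ f i) ∧
    ∀ ξ ∈ OmegaXi C B, ∀ sl ∈ OmegaSl C B ξ,
      (∃! p : (Fin NG → ℝ) × (Fin (NG + NL) → ℝ), IsOptimal C B f ξ sl p.1 p.2) ∧
      ∀ sg θ τ μp μm lp lm, IsKKT C B f ξ sl sg θ τ μp μm lp lm →
        NG - 1 ≤ nnz μp + nnz μm + nnz lp + nnz lm }

/-- Number of binding inequality constraints at `(sg, θ)` (among the 2N_G + 2E). -/
def bindingCount {NG NL E : ℕ} (C : Matrix (Fin (NG + NL)) (Fin E) ℝ)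
    (B : Matrix (Fin E) (Fin E) ℝ) (ξ : XiT NG E) (sg : Fin NG → ℝ)
    (θ : Fin (NG + NL) → ℝ) : ℕ :=
  Set.ncard { i : Fin NG | sg i = ξ.1 i } + Set.ncard { i : Fin NG | sg i = ξ.2.1 i } +
  Set.ncard { e : Fin E | ((B * Cᵀ) *ᵥ θ) e = ξ.2.2.1 e } +
  Set.ncard { e : Fin E | ((B * Cᵀ) *ᵥ θ) e = ξ.2.2.2 e }

/-- ~Ω_sl(ξ, f): loads with exactly N_G − 1 binding constraints at the optimum. -/
def TOmegaSl {NG NL E : ℕ} (C : Matrix (Fin (NG + NL)) (Fin E) ℝ)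
    (B : Matrix (Fin E) (Fin E) ℝ) (f : Fin NG → ℝ) (ξ : XiT NG E) :
    Set (Fin NL → ℝ) :=
  { sl | sl ∈ OmegaSl C B ξ ∧
    ∀ sg θ, IsOptimal C B f ξ sl sg θ → bindingCount C B ξ sg θ = NG - 1 }

/-- Indices of binding inequality constraints:
`inl i` = upper generation, `inr (inl i)` = lower generation,
`inr (inr (inl e))` = upper flow, `inr (inr (inr e))` = lower flow. -/
def BindingIdx {NG NL E : ℕ} (C : Matrix (Fin (NG + NL)) (Fin E) ℝ)
    (B : Matrix (Fin E) (Fin E) ℝ) (ξ : XiT NG E) (sg : Fin NG → ℝ)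
    (θ : Fin (NG + NL) → ℝ) : Set (Fin NG ⊕ Fin NG ⊕ Fin E ⊕ Fin E) :=
  { c | match c with
    | Sum.inl i => sg i = ξ.1 i
    | Sum.inr (Sum.inl i) => sg i = ξ.2.1 i
    | Sum.inr (Sum.inr (Sum.inl e)) => ((B * Cᵀ) *ᵥ θ) e = ξ.2.2.1 e
    | Sum.inr (Sum.inr (Sum.inr e)) => ((B * Cᵀ) *ᵥ θ) e = ξ.2.2.2 e }

/-- Gradients of the N + 1 equality constraints, as vectors in ℝ^{N_G} × ℝ^{N}. -/
def eqGrad {NG NL E : ℕ} (C : Matrix (Fin (NG + NL)) (Fin E) ℝ)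
    (B : Matrix (Fin E) (Fin E) ℝ) :
    (Unit ⊕ Fin (NG + NL)) → (Fin NG → ℝ) × (Fin (NG + NL) → ℝ)
  | Sum.inl _ => (0, fun j => if (j : ℕ) = 0 then 1 else 0)
  | Sum.inr i => ((fun k : Fin NG => if (k : ℕ) = (i : ℕ) then -1 else 0),
      fun j => (C * B * Cᵀ) i j)

/-- Gradients of the inequality constraints. -/
def ineqGrad {NG NL E : ℕ} (C : Matrix (Fin (NG + NL)) (Fin E) ℝ)
    (B : Matrix (Fin E) (Fin E) ℝ) :
    (Fin NG ⊕ Fin NG ⊕ Fin E ⊕ Fin E) → (Fin NG → ℝ) × (Fin (NG + NL) → ℝ)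
  | Sum.inl i => (Pi.single i 1, 0)
  | Sum.inr (Sum.inl i) => (-Pi.single i 1, 0)
  | Sum.inr (Sum.inr (Sum.inl e)) => (0, fun j => (B * Cᵀ) e j)
  | Sum.inr (Sum.inr (Sum.inr e)) => (0, fun j => -(B * Cᵀ) e j)

/-- The family of gradients of all equality constraints together with the binding
inequality constraints at `(sg, θ)`. -/
def fullGrad {NG NL E : ℕ} (C : Matrix (Fin (NG + NL)) (Fin E) ℝ)
    (B : Matrix (Fin E) (Fin E) ℝ) (ξ : XiT NG E) (sg : Fin NG → ℝ)
    (θ : Fin (NG + NL) → ℝ) :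
    ((Unit ⊕ Fin (NG + NL)) ⊕ ↥(BindingIdx C B ξ sg θ)) →
      (Fin NG → ℝ) × (Fin (NG + NL) → ℝ) :=
  fun i => match i with
    | Sum.inl j => eqGrad C B j
    | Sum.inr c => ineqGrad C B c.1

/-- S_G ⊥ S_B : the equality-constraint gradients together with the gradients
`(e_i, 0)`, `i ∈ S_G`, and `(0, row e of B Cᵀ)`, `e ∈ S_B`, are linearly independent. -/
def Perp {NG NL E : ℕ} (C : Matrix (Fin (NG + NL)) (Fin E) ℝ)
    (B : Matrix (Fin E) (Fin E) ℝ) (SG : Finset (Fin NG)) (SB : Finset (Fin E)) : Prop :=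
  LinearIndependent ℝ (fun i : (Unit ⊕ Fin (NG + NL)) ⊕ (↥SG ⊕ ↥SB) =>
    match i with
    | Sum.inl j => eqGrad C B j
    | Sum.inr (Sum.inl g) => ((Pi.single (g : Fin NG) 1 : Fin NG → ℝ), (0 : Fin (NG + NL) → ℝ))
    | Sum.inr (Sum.inr e) => ((0 : Fin NG → ℝ), fun j => (B * Cᵀ) (e : Fin E) j))

/-- The OPF operator: the generation part of the (unique) optimal solution. -/
def OPFmap {NG NL E : ℕ} (C : Matrix (Fin (NG + NL)) (Fin E) ℝ)
    (B : Matrix (Fin E) (Fin E) ℝ) (f : Fin NG → ℝ) (ξ : XiT NG E)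
    (sl : Fin NL → ℝ) : Fin NG → ℝ := by
  classical
  exact if h : ∃ p : (Fin NG → ℝ) × (Fin (NG + NL) → ℝ), IsOptimal C B f ξ sl p.1 p.2
    then h.choose.1 else 0

/-- The matrix R(S_G, S_B)ᵀ: rows N_G+1,…,N of C B Cᵀ; the rows of C B Cᵀ indexed
by S_G; the rows of B Cᵀ indexed by S_B; and e₁ᵀ. -/
def Rmat {NG NL E : ℕ} (C : Matrix (Fin (NG + NL)) (Fin E) ℝ)
    (B : Matrix (Fin E) (Fin E) ℝ) (SG : Finset (Fin NG)) (SB : Finset (Fin E)) :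
    Matrix ((Fin NL ⊕ (↥SG ⊕ ↥SB)) ⊕ Unit) (Fin (NG + NL)) ℝ :=
  Matrix.of fun i j => match i with
    | Sum.inl (Sum.inl k) => (C * B * Cᵀ) (Fin.natAdd NG k) j
    | Sum.inl (Sum.inr (Sum.inl g)) => (C * B * Cᵀ) (Fin.castAdd NL (g : Fin NG)) j
    | Sum.inl (Sum.inr (Sum.inr e)) => (B * Cᵀ) (e : Fin E) j
    | Sum.inr _ => if (j : ℕ) = 0 then 1 else 0

/-- The matrix Π applied to a load vector: embeds ℝ^{N_L} in the row-index space. -/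
def padSl {NG NL E : ℕ} (SG : Finset (Fin NG)) (SB : Finset (Fin E))
    (v : Fin NL → ℝ) : (Fin NL ⊕ (↥SG ⊕ ↥SB)) ⊕ Unit → ℝ
  | Sum.inl (Sum.inl k) => v k
  | _ => 0

/-- J(S_G, S_B) as a map: v ↦ −G (R(S_G,S_B)ᵀ)⁻¹ Π v, where G consists of the
first N_G rows of C B Cᵀ. -/
def JFun {NG NL E : ℕ} (C : Matrix (Fin (NG + NL)) (Fin E) ℝ)
    (B : Matrix (Fin E) (Fin E) ℝ) (SG : Finset (Fin NG)) (SB : Finset (Fin E))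
    (v : Fin NL → ℝ) : Fin NG → ℝ :=
  fun i =>
    -(((C * B * Cᵀ) *ᵥ (Function.invFun (Rmat C B SG SB).mulVec (padSl SG SB v)))
      (Fin.castAdd NL i))

/-- J(S_G, S_B) as an N_G × N_L matrix. -/
def Jmatrix {NG NL E : ℕ} (C : Matrix (Fin (NG + NL)) (Fin E) ℝ)
    (B : Matrix (Fin E) (Fin E) ℝ) (SG : Finset (Fin NG)) (SB : Finset (Fin E)) :
    Matrix (Fin NG) (Fin NL) ℝ :=
  Matrix.of fun i j => JFun C B SG SB (Pi.single j 1) i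

/-!
The admissible triples `(τ, μ, λ)` form the kernel of the linear map `(τ, μ, λ) ↦ Mᵀτ + CBμ` on
`ℝ^{N+1} × ℝ^S × ℝ^T`. Allowing `μ` and `λ` enlarges the kernel of `Mᵀ` by at most `|S| + |T|`
dimensions, and that kernel is a line because the `(N+1) × N` matrix `M` has full column rank: if
`C B Cᵀ x = 0`, then `Cᵀ x = 0` by positivity of `B`, so `x` is constant, and the last row of `M`
forces it to vanish. The set of cost vectors is the image of that space of triples under a linear
map.
-/

open Module

section LinearAlgebra

theorem finrank_ker_coprod_le {K U V W : Type*} [DivisionRing K]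
    [AddCommGroup U] [Module K U] [FiniteDimensional K U]
    [AddCommGroup V] [Module K V] [FiniteDimensional K V]
    [AddCommGroup W] [Module K W] (f : U →ₗ[K] W) (g : V →ₗ[K] W) :
    finrank K (LinearMap.ker (f.coprod g)) ≤ finrank K (LinearMap.ker f) + finrank K V := by
  have hcoprod := (f.coprod g).finrank_range_add_finrank_ker
  have hf := f.finrank_range_add_finrank_ker
  have hrange : finrank K (LinearMap.range f) ≤ finrank K (LinearMap.range (f.coprod g)) :=
    Submodule.finrank_mono (f.range_coprod g ▸ le_sup_left)
  rw [finrank_prod] at hcoprod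
  lia

variable (R : Type*) {ι : Type*} [Semiring R]

/-- The space `R^S` of vectors vanishing outside `S`, kept inside `ι → R` so that multipliers
attached to `S` can be handled without reindexing. -/
def supportedOn (S : Set ι) : Submodule R (ι → R) :=
  ⨅ i ∈ Sᶜ, LinearMap.ker (LinearMap.proj i)

variable {R} in
theorem mem_supportedOn {S : Set ι} {v : ι → R} : v ∈ supportedOn R S ↔ ∀ i ∉ S, v i = 0 := by
  simp only [supportedOn, Submodule.mem_iInf, Set.mem_compl_iff, LinearMap.mem_ker,
    LinearMap.proj_apply]

open scoped Classical in
/-- Restriction to `S` identifies the vectors supported on `S` with `S → R`. -/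
def supportedOnEquiv (S : Set ι) : supportedOn R S ≃ₗ[R] (S → R) :=
  LinearMap.iInfKerProjEquiv R (fun _ => R) disjoint_compl_right (Set.union_compl_self S).ge

instance (S : Set ι) [Finite S] : Module.Finite R (supportedOn R S) :=
  .equiv (supportedOnEquiv R S).symm

theorem finrank_supportedOn [StrongRankCondition R] (S : Finset ι) :
    finrank R (supportedOn R (S : Set ι)) = S.card := by
  simp [(supportedOnEquiv R (S : Set ι)).finrank_eq]

end LinearAlgebra

section Matrix

variable {m n : Type*} [Fintype m] [Fintype n]

theorem mul_mul_conjTranspose_mulVec_eq_zero_iff {R : Type*} [CommRing R]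
    [PartialOrder R] [StarRing R] {B : Matrix n n R} (hB : B.PosDef) (C : Matrix m n R)
    (x : m → R) : (C * B * Cᴴ) *ᵥ x = 0 ↔ Cᴴ *ᵥ x = 0 := by
  refine ⟨fun h => ?_, fun h => by rw [← mulVec_mulVec, h, mulVec_zero]⟩
  by_contra hx
  have hpos := hB.dotProduct_mulVec_pos hx
  rw [star_mulVec, conjTranspose_conjTranspose, ← dotProduct_mulVec, mulVec_mulVec, mulVec_mulVec,
    h, dotProduct_zero] at hpos
  exact hpos.false

theorem finrank_ker_mulVecLin_transpose_add_card {K : Type*} [Field K] {M : Matrix m n K}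
    (hM : Function.Injective M.mulVec) :
    finrank K (LinearMap.ker Mᵀ.mulVecLin) + Fintype.card n = Fintype.card m := by
  have hrank : finrank K (LinearMap.range Mᵀ.mulVecLin) = Fintype.card n := by
    rw [← Matrix.rank, rank_transpose, Matrix.rank, LinearMap.finrank_range_of_inj hM,
      finrank_fintype_fun_eq_card]
  rw [← hrank, add_comm, LinearMap.finrank_range_add_finrank_ker, finrank_fintype_fun_eq_card]

end Matrix

theorem PosDiag.posDef {E : ℕ} {B : Matrix (Fin E) (Fin E) ℝ} (hB : PosDiag B) : B.PosDef := by
  have hdiag : B.IsDiag := fun e e' hne => hB.2 e e' hne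
  rw [← hdiag.diagonal_diag]
  exact .diagonal hB.1

section Mmat

variable {NG NL E : ℕ} (C : Matrix (Fin (NG + NL)) (Fin E) ℝ) (B : Matrix (Fin E) (Fin E) ℝ)
  (x : Fin (NG + NL) → ℝ)

theorem Mmat_mulVec_castSucc (i : Fin (NG + NL)) :
    (Mmat C B *ᵥ x) i.castSucc = ((C * B * Cᵀ) *ᵥ x) i := by
  simp [mulVec, dotProduct, Mmat]

theorem Mmat_mulVec_last (h : 0 < NG + NL) : (Mmat C B *ᵥ x) (Fin.last _) = x ⟨0, h⟩ := by
  have hzero (j : Fin (NG + NL)) : (j : ℕ) = 0 ↔ j = ⟨0, h⟩ := by rw [Fin.ext_iff]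
  simp [mulVec, dotProduct, Mmat, hzero]

variable {C B}

theorem Mmat_mulVec_injective (hC : ConnectedIncidence C) (hB : PosDiag B) :
    Function.Injective (Mmat C B).mulVec := by
  refine (injective_iff_map_eq_zero (Mmat C B).mulVecLin).2 fun x hx => ?_
  rw [mulVecLin_apply] at hx
  have hLaplacian : (C * B * Cᵀ) *ᵥ x = 0 := by
    ext i
    rw [← Mmat_mulVec_castSucc, hx, Pi.zero_apply, Pi.zero_apply]
  obtain ⟨c, rfl⟩ : ∃ c : ℝ, x = fun _ => c := (hC x).1 <| by
    simpa only [conjTranspose_eq_transpose_of_trivial] using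
      (mul_mul_conjTranspose_mulVec_eq_zero_iff hB.posDef C x).1 hLaplacian
  ext j
  simpa only [hx, Pi.zero_apply, eq_comm] using Mmat_mulVec_last C B (fun _ => c) j.pos

theorem finrank_ker_mulVecLin_Mmat_transpose (hC : ConnectedIncidence C) (hB : PosDiag B) :
    finrank ℝ (LinearMap.ker (Mmat C B)ᵀ.mulVecLin) = 1 := by
  have h := finrank_ker_mulVecLin_transpose_add_card (Mmat_mulVec_injective hC hB)
  simp only [Fintype.card_fin] at h
  lia

end Mmat

theorem Qset_in_low_dim_subspace_general {K m n e g : Type*} [Field K] [Fintype m] [Fintype e]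
    (D : Matrix n m K) (A : Matrix n e K) (p : g → m) (S : Finset e) (T : Finset g) :
    ∃ V : Submodule K (g → K),
      finrank K V ≤ S.card + T.card + finrank K (LinearMap.ker D.mulVecLin) ∧
      { f : g → K |
        ∃ (τ : m → K) (μ : e → K) (lam : g → K),
          (∀ j ∉ S, μ j = 0) ∧ (∀ i ∉ T, lam i = 0) ∧
          D *ᵥ τ + A *ᵥ μ = 0 ∧ (∀ i, -f i = -τ (p i) + lam i) } ⊆ (V : Set (g → K)) := by
  let US := supportedOn K (S : Set e)
  let UT := supportedOn K (T : Set g)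
  let stationarity : (m → K) × US × UT →ₗ[K] n → K :=
    D.mulVecLin.coprod (A.mulVecLin ∘ₗ US.subtype ∘ₗ LinearMap.fst K US UT)
  let cost : (m → K) × US × UT →ₗ[K] g → K :=
    (LinearMap.funLeft K K p).coprod (-(UT.subtype ∘ₗ LinearMap.snd K US UT))
  refine ⟨(LinearMap.ker stationarity).map cost, ?_, ?_⟩
  · calc finrank K ((LinearMap.ker stationarity).map cost)
        ≤ finrank K (LinearMap.ker stationarity) := Submodule.finrank_map_le _ _
      _ ≤ finrank K (LinearMap.ker D.mulVecLin) + finrank K (US × UT) :=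
        finrank_ker_coprod_le _ _
      _ = S.card + T.card + finrank K (LinearMap.ker D.mulVecLin) := by
        rw [finrank_prod, finrank_supportedOn, finrank_supportedOn, add_comm]
  · rintro f ⟨τ, μ, lam, hμ, hlam, hstat, hf⟩
    refine ⟨(τ, ⟨μ, mem_supportedOn.2 hμ⟩, ⟨lam, mem_supportedOn.2 hlam⟩), hstat, ?_⟩
    ext i
    change τ (p i) + -lam i = f i
    rw [← neg_inj, hf i, neg_add, neg_neg]

theorem Qset_in_low_dim_subspace {NG NL E : ℕ} (hNG : 0 < NG) (hNL : 0 < NL) (hE : 0 < E)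
    (C : Matrix (Fin (NG + NL)) (Fin E) ℝ) (B : Matrix (Fin E) (Fin E) ℝ)
    (hInc : IsIncidence C) (hConn : ConnectedIncidence C) (hB : PosDiag B)
    (S : Finset (Fin E)) (T : Finset (Fin NG)) :
    ∃ V : Submodule ℝ (Fin NG → ℝ), Module.finrank ℝ V ≤ S.card + T.card + 1 ∧
      { f : Fin NG → ℝ |
        ∃ (τ : Fin (NG + NL + 1) → ℝ) (μ : Fin E → ℝ) (lam : Fin NG → ℝ),
          (∀ e ∉ S, μ e = 0) ∧ (∀ i ∉ T, lam i = 0) ∧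
          (Mmat C B)ᵀ *ᵥ τ + (C * B) *ᵥ μ = 0 ∧
          (∀ i : Fin NG, -f i = -τ (Fin.castLE (by omega) i) + lam i) } ⊆
        (V : Set (Fin NG → ℝ)) := by
  simpa only [finrank_ker_mulVecLin_Mmat_transpose hConn hB] using
    Qset_in_low_dim_subspace_general (Mmat C B)ᵀ (C * B) (Fin.castLE (by omega)) S T

end
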